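/- Let n ≥ 1, let G be a subgroup of the symmetric group S_n, and let C be a left coset of G in S_n. If the proportion of derangements in C equals the proportion of derangements in S_n, i.e., |{σ ∈ C : σ has no fixed points}| / |C| = D_n / n!, then G = S_n (and hence C = S_n). -/

import Mathlib

/-!
If the coset `σG` has the same proportion of derangements as `S_n`, then the index of `G` divides
`D_n`. The congruence `D_n ≡ ± D_j` modulo `n - j`, for `j ≤ 4`, provides integers prime to `D_n`,
and hence to the index of `G`. With `j = 0`, the index is prime to `n`, so `G` is transitive. For a
prime `p` not dividing the index, `G` contains a Sylow `p`-subgroup of `S_n`, and so a cycle of each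
length `p ^ e ≤ n`. For `n ≥ 5`, suitable such `p` exclude nontrivial blocks, so `G` is primitive.
For `n ≠ 7` some such `p` also satisfies `2 * p ≤ n + 1`: a theorem of Jordan makes `G` multiply
transitive enough to contain two `p`-cycles that move exactly one point in common. Their commutator
is a `3`-cycle, so `A_n ≤ G`. For `n = 7`, the presence of a `5`-cycle makes `G` triply transitive,
which bounds its index by `6`.

The signed count of derangements is the determinant of `J - I`, where `J` is the all-ones matrix, so
it is `(-1) ^ n * (1 - n)`. For `n ≥ 2` this does not vanish: even and odd derangements are not
equally numerous, which excludes `G = A_n`. For `n = 4` the divisibility only leaves the Sylow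
`2`-subgroups, which are centralizers of double transpositions, and counting settles them.
-/

/-! ### Derangement numbers modulo primes -/

theorem numDerangements_add_modEq (j m : ℕ) :
    (numDerangements (j + m) : ℤ) ≡ (-1) ^ m * numDerangements j [ZMOD m] := by
  induction j with
  | zero =>
    rcases m with _ | m
    · simp
    · rw [Int.modEq_iff_dvd, zero_add, numDerangements_succ]
      exact ⟨-numDerangements m, by push_cast [numDerangements_zero]; ring⟩
  | succ j ih =>
    rw [add_right_comm, numDerangements_succ, numDerangements_succ]
    have hcoeff : ((j + m : ℕ) + 1 : ℤ) ≡ j + 1 [ZMOD m] :=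
      Int.modEq_iff_dvd.mpr ⟨-1, by push_cast; ring⟩
    calc ((j + m : ℕ) + 1 : ℤ) * numDerangements (j + m) - (-1) ^ (j + m)
        ≡ (j + 1) * ((-1) ^ m * numDerangements j) - (-1) ^ (j + m) [ZMOD m] :=
          (hcoeff.mul ih).sub_right _
      _ = (-1) ^ m * ((j + 1) * numDerangements j - (-1) ^ j) := by ring

theorem dvd_numDerangements_iff_of_modEq {d n j : ℕ} (h : n ≡ j [MOD d]) :
    d ∣ numDerangements n ↔ d ∣ numDerangements j := by
  wlog hjn : j ≤ n generalizing n j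
  · exact (this h.symm (le_of_not_ge hjn)).symm
  obtain ⟨m, rfl⟩ := Nat.exists_eq_add_of_le hjn
  have hdm : d ∣ m := by simpa using (Nat.modEq_iff_dvd' hjn).mp h.symm
  have hmod : (numDerangements (j + m) : ℤ) ≡ (-1) ^ m * numDerangements j [ZMOD d] :=
    (numDerangements_add_modEq j m).of_dvd (Int.natCast_dvd_natCast.mpr hdm)
  have hunit : IsUnit ((-1 : ℤ) ^ m) := isUnit_one.neg.pow m
  rw [← Int.natCast_dvd_natCast, hmod.dvd_iff, hunit.dvd_mul_left, Int.natCast_dvd_natCast]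

theorem coprime_numDerangements (n : ℕ) : n.Coprime (numDerangements n) := by
  have h : n.gcd (numDerangements n) ∣ numDerangements 0 :=
    (dvd_numDerangements_iff_of_modEq
      ((Nat.gcd_dvd_left _ _).modEq_zero_nat)).mp (Nat.gcd_dvd_right _ _)
  exact Nat.dvd_one.mp h

theorem exists_le_modEq_of_not_dvd_choose {p n k r : ℕ} (hp : p.Prime) (hn : n ≡ r [MOD p])
    (h : ¬ p ∣ n.choose k) : ∃ s ≤ r, k ≡ s [MOD p] := by
  have := Fact.mk hp
  refine ⟨k % p, ?_, (Nat.mod_modEq k p).symm⟩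
  suffices k % p ≤ n % p from (this.trans_eq hn).trans (Nat.mod_le r p)
  by_contra! hlt
  refine h ((Choose.choose_modEq_choose_mod_mul_choose_div_nat.dvd_iff dvd_rfl).mpr ?_)
  simp [Nat.choose_eq_zero_of_lt hlt]

/-- `p` is a prime which excludes a system of `m` blocks of size `k` for a transitive group of
degree `k * m` whose index `i` in the symmetric group divides `numDerangements (k * m)`. There are
two ways of reaching a contradiction with `p ∤ i`: the index `i` is divisible by
`(k * m - 1).choose (k - 1)`, and the group contains a cycle whose length is the largest power of
`p` below `k * m`, which forces `k` to be a power of `p` unless `m < p`. -/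
structure IsBlockObstruction (p k m : ℕ) : Prop where
  prime : p.Prime
  le_mul : p ≤ k * m
  not_dvd : ¬ p ∣ numDerangements (k * m)
  dvd_choose_or : p ∣ (k * m - 1).choose (k - 1) ∨ p ≤ m ∧ ∀ e, ¬ k ∣ p ^ e

theorem dvd_choose_of_mul_modEq_two {q k m : ℕ} (hq : q.Prime) (hq2 : q ≠ 2) (hk : k ≠ 0)
    (hm : 2 < m) (hmq : m < q) (h : k * m ≡ 2 [MOD q]) : q ∣ (k * m - 1).choose (k - 1) := by
  obtain ⟨a, rfl⟩ := Nat.exists_eq_add_one_of_ne_zero hk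
  by_contra hch
  have hpred : (a + 1) * m - 1 ≡ 1 [MOD q] :=
    Nat.ModEq.add_right_cancel' 1 (by rwa [Nat.sub_add_cancel (by grind)])
  obtain ⟨s, hs, has⟩ := exists_le_modEq_of_not_dvd_choose hq hpred hch
  rw [Nat.add_sub_cancel] at has
  have hsm : (s + 1) * m ≡ 2 [MOD q] := ((has.symm.add_right 1).mul_right m).trans h
  rcases Nat.le_one_iff_eq_zero_or_eq_one.mp hs with rfl | rfl
  · have : m ≡ 2 [MOD q] := by simpa using hsm
    exact hm.ne' (this.eq_of_lt_of_lt hmq (by lia))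
  · have hcop : q.Coprime 2 := (Nat.coprime_primes hq Nat.prime_two).mpr hq2
    have : m ≡ 1 [MOD q] := Nat.ModEq.cancel_left_of_coprime hcop hsm
    have := this.eq_of_lt_of_lt hmq hq.one_lt
    lia

theorem dvd_choose_of_mul_two_modEq_three {r k : ℕ} (hr : r.Prime) (hr3 : r ≠ 3) (hk : k ≠ 0)
    (h : k * 2 ≡ 3 [MOD r]) : r ∣ (k * 2 - 1).choose (k - 1) := by
  obtain ⟨a, rfl⟩ := Nat.exists_eq_add_one_of_ne_zero hk
  by_contra hch
  have hpred : (a + 1) * 2 - 1 ≡ 2 [MOD r] :=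
    Nat.ModEq.add_right_cancel' 1 (by rwa [Nat.sub_add_cancel (by lia)])
  obtain ⟨s, hs, has⟩ := exists_le_modEq_of_not_dvd_choose hr hpred hch
  rw [Nat.add_sub_cancel] at has
  have hs3 : (s + 1) * 2 ≡ 3 [MOD r] := ((has.symm.add_right 1).mul_right 2).trans h
  have hdvd : (r : ℤ) ∣ 3 - (s + 1) * 2 := by exact_mod_cast Nat.modEq_iff_dvd.mp hs3
  interval_cases s
  · exact hr.not_dvd_one (by simpa [← Int.natCast_dvd_natCast] using hdvd)
  · exact hr.not_dvd_one (by simpa [← Int.natCast_dvd_natCast] using hdvd)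
  · have : r ∣ 3 := by simpa [← Int.natCast_dvd_natCast] using hdvd
    exact hr3 ((Nat.prime_dvd_prime_iff_eq hr Nat.prime_three).mp this)

theorem isBlockObstruction_of_mul_modEq_two {q k m : ℕ} (hq : q.Prime) (hq2 : q ≠ 2)
    (hk : k ≠ 0) (hm : 2 < m) (hqn : q ≤ k * m) (h : k * m ≡ 2 [MOD q])
    (hpow : ∀ e, ¬ k ∣ q ^ e) : IsBlockObstruction q k m where
  prime := hq
  le_mul := hqn
  not_dvd := by
    rw [dvd_numDerangements_iff_of_modEq h]
    exact hq.not_dvd_one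
  dvd_choose_or := (lt_or_ge m q).imp
    (fun hmq ↦ dvd_choose_of_mul_modEq_two hq hq2 hk hm hmq h) (fun hqm ↦ ⟨hqm, hpow⟩)

theorem isBlockObstruction_of_dvd {p k m : ℕ} (hp : p.Prime) (hk : k ≠ 0) (hpm : p ≤ m)
    (hdvd : p ∣ k * m) (hpow : ∀ e, ¬ k ∣ p ^ e) : IsBlockObstruction p k m where
  prime := hp
  le_mul := hpm.trans (Nat.le_mul_of_pos_left m hk.bot_lt)
  not_dvd := hp.coprime_iff_not_dvd.mp ((coprime_numDerangements _).coprime_dvd_left hdvd)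
  dvd_choose_or := .inr ⟨hpm, hpow⟩

theorem isBlockObstruction_of_mul_two_modEq_three {r k : ℕ} (hr : r.Prime) (hr2 : r ≠ 2)
    (hr3 : r ≠ 3) (hk : k ≠ 0) (hrk : r ≤ k * 2) (h : k * 2 ≡ 3 [MOD r]) :
    IsBlockObstruction r k 2 where
  prime := hr
  le_mul := hrk
  not_dvd := by
    rw [dvd_numDerangements_iff_of_modEq h]
    exact fun hdvd ↦ hr2 ((Nat.prime_dvd_prime_iff_eq hr Nat.prime_two).mp hdvd)
  dvd_choose_or := .inl (dvd_choose_of_mul_two_modEq_three hr hr3 hk h)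

theorem exists_prime_modEq_of_add_two_le {n j : ℕ} (h : j + 2 ≤ n) :
    ∃ p, p.Prime ∧ p ≤ n ∧ n ≡ j [MOD p] := by
  obtain ⟨p, hp, hdvd⟩ := Nat.exists_prime_and_dvd (show n - j ≠ 1 by lia)
  exact ⟨p, hp, (Nat.le_of_dvd (by lia) hdvd).trans (Nat.sub_le n j),
    ((Nat.modEq_iff_dvd' (by lia)).mpr hdvd).symm⟩

theorem not_dvd_prime_pow_of_prime_dvd {p q k : ℕ} (hp : p.Prime) (hq : q.Prime) (hpq : p ≠ q)
    (hpk : p ∣ k) (e : ℕ) : ¬ k ∣ q ^ e := fun hk ↦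
  hpq ((Nat.prime_dvd_prime_iff_eq hp hq).mp (hp.dvd_of_dvd_pow (hpk.trans hk)))

theorem exists_isBlockObstruction_of_odd {k m : ℕ} (hk : 2 ≤ k) (hm : 2 ≤ m)
    (hodd : Odd (k * m)) : ∃ p, IsBlockObstruction p k m := by
  have hm2 : m ≠ 2 := by rintro rfl; exact Nat.not_odd_iff_even.mpr (even_two.mul_left k) hodd
  have hkm : 2 * 3 ≤ k * m := Nat.mul_le_mul hk (by lia)
  obtain ⟨q, hq, hqn, hmod⟩ := exists_prime_modEq_of_add_two_le (j := 2) (n := k * m) (by lia)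
  have hq2 : q ≠ 2 := by
    rintro rfl
    exact absurd (Nat.odd_iff.mp hodd) (by rw [hmod]; decide)
  obtain ⟨p, hp, hpk⟩ := Nat.exists_prime_and_dvd (show k ≠ 1 by lia)
  have hpq : p ≠ q := by
    rintro rfl
    have : p ∣ 2 := (hmod.dvd_iff dvd_rfl).mp (hpk.mul_right m)
    exact hq2 ((Nat.prime_dvd_prime_iff_eq hq Nat.prime_two).mp this)
  exact ⟨q, isBlockObstruction_of_mul_modEq_two hq hq2 (by lia) (by lia) hqn hmod
    (not_dvd_prime_pow_of_prime_dvd hp hq hpq hpk)⟩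

theorem two_dvd_of_dvd_two_pow {k a : ℕ} (hk : 2 ≤ k) (h : k ∣ 2 ^ a) : 2 ∣ k := by
  obtain ⟨b, -, rfl⟩ := (Nat.dvd_prime_pow Nat.prime_two).mp h
  exact dvd_pow_self 2 (by rintro rfl; simp at hk)

theorem exists_isBlockObstruction_of_eq_two_pow {k m a : ℕ} (hk : 2 ≤ k) (hm : 2 ≤ m)
    (ha : k * m = 2 ^ a) (h5 : 5 ≤ k * m) : ∃ p, IsBlockObstruction p k m := by
  have h2k : 2 ∣ k := two_dvd_of_dvd_two_pow hk ⟨m, ha.symm⟩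
  have h4 : 2 * 2 ∣ k * m :=
    mul_dvd_mul h2k (two_dvd_of_dvd_two_pow hm ⟨k, by rw [← ha, mul_comm]⟩)
  rcases hm.eq_or_lt with rfl | hm2
  · obtain ⟨r, hr, hrn, hmod⟩ := exists_prime_modEq_of_add_two_le (j := 3) (n := k * 2) h5
    refine ⟨r, isBlockObstruction_of_mul_two_modEq_three hr ?_ ?_ (by lia) hrn hmod⟩
    · rintro rfl
      exact absurd hmod (by simp [Nat.ModEq])
    · rintro rfl
      have : 3 ∣ 2 ^ a := ha ▸ (hmod.dvd_iff dvd_rfl).mpr dvd_rfl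
      exact absurd (Nat.prime_three.dvd_of_dvd_pow this) (by decide)
  · -- `k * m / 2 - 1` is odd, so its prime factors are the odd ones of `k * m - 2`.
    obtain ⟨q, hq, hqn, hmod⟩ :=
      exists_prime_modEq_of_add_two_le (j := 1) (n := k * m / 2) (by lia)
    have hq2 : q ≠ 2 := by
      rintro rfl
      have : k * m / 2 % 2 = 1 := hmod
      lia
    have hmod2 : k * m ≡ 2 [MOD q] := by
      simpa [Nat.mul_div_cancel' (h2k.mul_right m)] using hmod.mul_left 2
    exact ⟨q, isBlockObstruction_of_mul_modEq_two hq hq2 (by lia) hm2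
      (hqn.trans (Nat.div_le_self _ _)) hmod2
      (not_dvd_prime_pow_of_prime_dvd Nat.prime_two hq hq2.symm h2k)⟩

theorem exists_isBlockObstruction_of_even {k m : ℕ} (hk : 2 ≤ k) (hm : 2 ≤ m)
    (heven : 2 ∣ k * m) (h5 : 5 ≤ k * m) : ∃ p, IsBlockObstruction p k m := by
  by_cases hk2 : ∀ e, ¬ k ∣ 2 ^ e
  · exact ⟨2, isBlockObstruction_of_dvd Nat.prime_two (by lia) hm heven hk2⟩
  push Not at hk2
  obtain ⟨e, hke⟩ := hk2
  by_cases hodd : ∃ p, p.Prime ∧ p ∣ m ∧ p ≠ 2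
  · obtain ⟨p, hp, hpm, hp2⟩ := hodd
    exact ⟨p, isBlockObstruction_of_dvd hp (by lia) (Nat.le_of_dvd (by lia) hpm) (hpm.mul_left k)
      (not_dvd_prime_pow_of_prime_dvd Nat.prime_two hp hp2.symm (two_dvd_of_dvd_two_pow hk hke))⟩
  · push Not at hodd
    obtain ⟨b, -, rfl⟩ := (Nat.dvd_prime_pow Nat.prime_two).mp hke
    have := Nat.eq_prime_pow_of_unique_prime_dvd (by lia) (fun {p} ↦ hodd p)
    exact exists_isBlockObstruction_of_eq_two_pow hk hm (by rw [this, ← pow_add]) h5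

theorem exists_isBlockObstruction {k m : ℕ} (hk : 2 ≤ k) (hm : 2 ≤ m) (h5 : 5 ≤ k * m) :
    ∃ p, IsBlockObstruction p k m := by
  rcases Nat.even_or_odd (k * m) with heven | hodd
  · exact exists_isBlockObstruction_of_even hk hm heven.two_dvd h5
  · exact exists_isBlockObstruction_of_odd hk hm hodd

theorem le_two_of_two_pow_eq_three_pow_add_one {b c : ℕ} (h : 2 ^ b = 3 ^ c + 1) : b ≤ 2 := by
  by_contra! hb
  have h8 : 2 ^ 3 ∣ 3 ^ c + 1 := h ▸ pow_dvd_pow 2 hb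
  have hmod : ∀ c : ℕ, 3 ^ c % 8 = 1 ∨ 3 ^ c % 8 = 3 := by
    intro c
    induction c with
    | zero => simp
    | succ c ih => lia
  grind

theorem mul_le_of_primes_dvd {p q n : ℕ} (hp : p.Prime) (hq : q.Prime) (hpq : p ≠ q) (hn : 0 < n)
    (hpn : p ∣ n) (hqn : q ∣ n) : p * q ≤ n :=
  Nat.le_of_dvd hn (((Nat.coprime_primes hp hq).mpr hpq).mul_dvd_of_dvd_of_dvd hpn hqn)

theorem exists_prime_two_mul_le_not_dvd_numDerangements_of_modEq_one {n : ℕ} (h5 : 5 ≤ n)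
    (h7 : n ≠ 7) (h6 : n ≡ 1 [MOD 6]) : ∃ r, r.Prime ∧ 2 * r ≤ n + 1 ∧ ¬ r ∣ numDerangements n := by
  have hmod : n % 6 = 1 := h6
  by_cases h3 : ∃ r, r.Prime ∧ r ∣ n - 3 ∧ r ≠ 2
  · obtain ⟨r, hr, hrn, hr2⟩ := h3
    refine ⟨r, hr, ?_, ?_⟩
    · have := mul_le_of_primes_dvd Nat.prime_two hr hr2.symm (by lia) (by lia) hrn
      lia
    · rw [dvd_numDerangements_iff_of_modEq ((Nat.modEq_iff_dvd' (by lia)).mpr hrn).symm]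
      exact fun h ↦ hr2 ((Nat.prime_dvd_prime_iff_eq hr Nat.prime_two).mp h)
  by_cases h4 : ∃ s, s.Prime ∧ s ∣ n - 4 ∧ s ≠ 3
  · obtain ⟨s, hs, hsn, hs3⟩ := h4
    refine ⟨s, hs, ?_, ?_⟩
    · have := mul_le_of_primes_dvd Nat.prime_three hs hs3.symm (by lia) (by lia) hsn
      lia
    · rw [dvd_numDerangements_iff_of_modEq ((Nat.modEq_iff_dvd' (by lia)).mpr hsn).symm]
      have hD4 : numDerangements 4 = 3 ^ 2 := by decide
      rw [hD4]
      exact not_dvd_prime_pow_of_prime_dvd hs Nat.prime_three hs3 dvd_rfl 2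
  push Not at h3 h4
  have htwo := Nat.eq_prime_pow_of_unique_prime_dvd (by lia) (fun {d} ↦ h3 d)
  have hthree := Nat.eq_prime_pow_of_unique_prime_dvd (by lia) (fun {d} ↦ h4 d)
  have hle := le_two_of_two_pow_eq_three_pow_add_one
    (show 2 ^ _ = 3 ^ _ + 1 by rw [← htwo, ← hthree]; lia)
  have : n - 3 ≤ 2 ^ 2 := htwo.trans_le (Nat.pow_le_pow_right two_pos hle)
  lia

theorem exists_prime_two_mul_le_not_dvd_numDerangements {n : ℕ} (h5 : 5 ≤ n) (h7 : n ≠ 7) :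
    ∃ r, r.Prime ∧ 2 * r ≤ n + 1 ∧ ¬ r ∣ numDerangements n := by
  by_cases h2 : n ≡ 0 [MOD 2]
  · exact ⟨2, Nat.prime_two, by lia, by rw [dvd_numDerangements_iff_of_modEq h2]; decide⟩
  by_cases h3 : n ≡ 0 [MOD 3]
  · exact ⟨3, Nat.prime_three, by lia, by rw [dvd_numDerangements_iff_of_modEq h3]; decide⟩
  by_cases h3' : n ≡ 2 [MOD 3]
  · exact ⟨3, Nat.prime_three, by lia, by rw [dvd_numDerangements_iff_of_modEq h3']; decide⟩
  exact exists_prime_two_mul_le_not_dvd_numDerangements_of_modEq_one h5 h7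
    (by unfold Nat.ModEq at *; lia)

open MulAction Equiv
open scoped Pointwise commutatorElement

/-! ### Subgroups of index prime to `p` -/

theorem exists_conj_mem_of_isPGroup {Γ : Type*} [Group Γ] {G H : Subgroup Γ} {p : ℕ} [Fact p.Prime]
    (hG : ¬ p ∣ G.index) (hH : IsPGroup p H) : ∃ g : Γ, ∀ h ∈ H, g⁻¹ * h * g ∈ G := by
  have : G.FiniteIndex := ⟨fun h0 ↦ hG (h0 ▸ dvd_zero p)⟩
  obtain ⟨x, hx⟩ := hH.nonempty_fixed_point_of_prime_not_dvd_card (Γ ⧸ G) hG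
  obtain ⟨g, rfl⟩ := QuotientGroup.mk_surjective x
  refine ⟨g, fun h hh ↦ ?_⟩
  have hfix : ((g : Γ) : Γ ⧸ G) = (h * g : Γ) := (hx ⟨h, hh⟩).symm
  rwa [QuotientGroup.eq, ← mul_assoc] at hfix

theorem exists_isCycle_mem_card_support_eq_prime_pow {α : Type*} [Fintype α] [DecidableEq α]
    {G : Subgroup (Perm α)} {p e : ℕ} (hp : p.Prime) (hG : ¬ p ∣ G.index) (he : e ≠ 0)
    (hcard : p ^ e ≤ Fintype.card α) : ∃ c ∈ G, c.IsCycle ∧ c.support.card = p ^ e := by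
  have := Fact.mk hp
  have htwo : 2 ≤ p ^ e := hp.two_le.trans (Nat.le_self_pow he p)
  obtain ⟨c, hc⟩ := (Perm.exists_with_cycleType_iff α (m := {p ^ e})).mpr (by simp [*])
  have hcyc : c.IsCycle := by rw [← Perm.card_cycleType_eq_one, hc, Multiset.card_singleton]
  have hsupp : c.support.card = p ^ e := by
    rw [← Perm.sum_cycleType, hc, Multiset.sum_singleton]
  have hpgroup : IsPGroup p (Subgroup.zpowers c) :=
    IsPGroup.of_card (by rw [Nat.card_zpowers, hcyc.orderOf, hsupp])
  obtain ⟨g, hg⟩ := exists_conj_mem_of_isPGroup hG hpgroup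
  refine ⟨g⁻¹ * c * g⁻¹⁻¹, ?_, hcyc.conj, by rw [Perm.card_support_conj, hsupp]⟩
  rw [inv_inv]
  exact hg c (Subgroup.mem_zpowers c)

theorem ncard_orbit_dvd_ncard_orbit_subgroup_mul_index {Γ X : Type*} [Group Γ] [MulAction Γ X]
    (G : Subgroup Γ) (x : X) : (orbit Γ x).ncard ∣ (orbit G x).ncard * G.index := by
  have hstab : stabilizer G x = (stabilizer Γ x).subgroupOf G := rfl
  rw [← index_stabilizer, ← index_stabilizer, hstab, ← Subgroup.relIndex,
    ← Subgroup.inf_relIndex_right, Subgroup.relIndex_mul_index inf_le_right]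
  exact Subgroup.index_dvd_of_le inf_le_left

theorem isPretransitive_of_coprime_card_index {Γ X : Type*} [Group Γ] [MulAction Γ X] [Finite X]
    [IsPretransitive Γ X] {G : Subgroup Γ} (h : (Nat.card X).Coprime G.index) :
    IsPretransitive G X := by
  rcases isEmpty_or_nonempty X with _ | ⟨⟨x⟩⟩
  · exact ⟨fun x ↦ isEmptyElim x⟩
  have hdvd : Nat.card X ∣ (orbit G x).ncard := by
    refine h.dvd_of_dvd_mul_right ?_
    have := ncard_orbit_dvd_ncard_orbit_subgroup_mul_index G x
    rwa [orbit_eq_univ, Set.ncard_univ] at this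
  have hpos : 0 < (orbit G x).ncard := (Set.ncard_pos).mpr ⟨x, mem_orbit_self x⟩
  rw [isPretransitive_iff_orbit_eq_univ x, Set.eq_univ_iff_ncard]
  exact (Set.ncard_le_card _).antisymm (Nat.le_of_dvd hpos hdvd)

theorem ncard_orbit_perm_set {α : Type*} [Finite α] (B : Set α) :
    (orbit (Perm α) B).ncard = (Nat.card α).choose B.ncard := by
  classical
  have := Set.powersetCard.isPretransitive (α := α) (n := B.ncard)
  obtain ⟨s, hs⟩ : ∃ s : Set.powersetCard α B.ncard, (s : Set α) = B :=
    ⟨Set.powersetCard.ofCard (Set.ncard_eq_toFinset_card B).symm, B.toFinite.coe_toFinset⟩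
  rw [← index_stabilizer, ← Set.powersetCard.card, ← index_stabilizer_of_transitive (Perm α) s,
    Set.powersetCard.stabilizer_coe, hs]

/-! ### Blocks and primitivity -/

theorem choose_pred_dvd_index_of_isBlock {α : Type*} [Finite α] {G : Subgroup (Perm α)}
    [IsPretransitive G α] {B : Set α} (hB : IsBlock G B) (hne : B.Nonempty) :
    (Nat.card α - 1).choose (B.ncard - 1) ∣ G.index := by
  have hB0 : 0 < B.ncard := (Set.ncard_pos).mpr hne
  have hmul : B.ncard * (orbit G B).ncard = Nat.card α := hB.ncard_block_mul_ncard_orbit_eq hne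
  have hα : 0 < Nat.card α := hB0.trans_le (Set.ncard_le_card B)
  have hchoose : (Nat.card α).choose B.ncard =
      (orbit G B).ncard * (Nat.card α - 1).choose (B.ncard - 1) := by
    have habsorb := Nat.add_one_mul_choose_eq (Nat.card α - 1) (B.ncard - 1)
    rw [Nat.sub_add_cancel hα, Nat.sub_add_cancel hB0] at habsorb
    refine Nat.eq_of_mul_eq_mul_right hB0 (habsorb.symm.trans ?_)
    rw [mul_right_comm, mul_comm _ B.ncard, hmul]
  refine Nat.dvd_of_mul_dvd_mul_left (pos_of_mul_pos_right (hmul.symm ▸ hα) hB0.le) ?_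
  rw [← hchoose, ← ncard_orbit_perm_set]
  exact ncard_orbit_dvd_ncard_orbit_subgroup_mul_index G B

section Cycle

variable {α : Type*} [Fintype α] [DecidableEq α] {c : Perm α} {B : Set α}

theorem support_subset_of_smul_eq (hcyc : c.IsCycle) (hcB : c • B = B) {x : α} (hx : x ∈ c.support)
    (hxB : x ∈ B) : (c.support : Set α) ⊆ B := by
  intro y hy
  obtain ⟨i, rfl⟩ := hcyc.exists_zpow_eq (Perm.mem_support.mp hx) (Perm.mem_support.mp hy)
  have hstab : c ^ i ∈ stabilizer (Perm α) B := zpow_mem (mem_stabilizer_iff.mpr hcB) i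
  rw [← mem_stabilizer_iff.mp hstab]
  exact Set.smul_mem_smul_set hxB

theorem ncard_dvd_card_support_of_disjoint_smul (hcyc : c.IsCycle)
    (hB : IsBlock (Subgroup.zpowers c) B) (hne : B.Nonempty) (hdisj : Disjoint (c • B) B) :
    B.ncard ∣ c.support.card := by
  have hmoved : ∀ b ∈ B, c b ≠ b := fun b hb hcb ↦ Set.disjoint_left.mp hdisj ⟨b, hb, hcb⟩ hb
  obtain ⟨b, hb⟩ := hne
  have horbit : orbit (stabilizer (Subgroup.zpowers c) B) b = B := by
    ext y
    constructor
    · rintro ⟨⟨z, hz⟩, rfl⟩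
      exact (mem_stabilizer_iff.mp hz).le (Set.smul_mem_smul_set hb)
    · intro hy
      obtain ⟨i, rfl⟩ := hcyc.exists_zpow_eq (hmoved b hb) (hmoved y hy)
      let z : Subgroup.zpowers c := ⟨c ^ i, Subgroup.zpow_mem_zpowers c i⟩
      exact ⟨⟨z, isBlock_iff_smul_eq_of_mem.mp hB hb hy⟩, rfl⟩
  rw [← horbit, ← index_stabilizer, ← hcyc.orderOf, ← Nat.card_zpowers]
  exact (Subgroup.index_dvd_card _).trans (Subgroup.card_subgroup_dvd_card _)

theorem ncard_dvd_card_support_or_card_support_le {G : Subgroup (Perm α)} [IsPretransitive G α]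
    (hB : IsBlock G B) (hne : B.Nonempty) (hc : c ∈ G) (hcyc : c.IsCycle) :
    B.ncard ∣ c.support.card ∨ c.support.card ≤ B.ncard := by
  obtain ⟨x, hx⟩ := hcyc.nonempty_support
  obtain ⟨b, hb⟩ := hne
  obtain ⟨g, rfl⟩ := exists_smul_eq G b x
  have hgb : g • b ∈ g • B := Set.smul_mem_smul_set hb
  have hgB : IsBlock G (g • B) := hB.translate g
  rw [← Set.ncard_smul_set g B]
  rcases isBlock_iff_smul_eq_or_disjoint.mp hgB ⟨c, hc⟩ with heq | hdisj
  · right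
    rw [← Set.ncard_coe_finset]
    exact Set.ncard_le_ncard (support_subset_of_smul_eq hcyc heq hx hgb)
  · left
    have hle : Subgroup.zpowers c ≤ G := Subgroup.zpowers_le.mpr hc
    have hblock : IsBlock (Subgroup.zpowers c) (g • B) := fun z w hzw ↦
      hgB (g₁ := ⟨z, hle z.2⟩) (g₂ := ⟨w, hle w.2⟩) hzw
    exact ncard_dvd_card_support_of_disjoint_smul hcyc hblock ⟨_, hgb⟩ hdisj

end Cycle

theorem exists_ncard_dvd_prime_pow_or_card_lt {α : Type*} [Finite α] {G : Subgroup (Perm α)}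
    [IsPretransitive G α] {B : Set α} (hB : IsBlock G B) (hne : B.Nonempty) {p : ℕ} (hp : p.Prime)
    (hpα : p ≤ Nat.card α) (hG : ¬ p ∣ G.index) :
    (∃ e, B.ncard ∣ p ^ e) ∨ Nat.card α < p * B.ncard := by
  classical
  have := Fintype.ofFinite α
  have hα : Nat.card α ≠ 0 := (hp.pos.trans_le hpα).ne'
  obtain ⟨c, hc, hcyc, hcard⟩ := exists_isCycle_mem_card_support_eq_prime_pow hp hG
    (Nat.log_pos hp.one_lt hpα).ne' (Nat.card_eq_fintype_card (α := α) ▸ Nat.pow_log_le_self p hα)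
  refine (ncard_dvd_card_support_or_card_support_le hB hne hc hcyc).imp
    (fun h ↦ ⟨_, hcard ▸ h⟩) (fun h ↦ ?_)
  calc Nat.card α < p ^ (Nat.log p (Nat.card α) + 1) := Nat.lt_pow_succ_log_self hp.one_lt _
    _ = p * p ^ Nat.log p (Nat.card α) := pow_succ' _ _
    _ ≤ p * B.ncard := Nat.mul_le_mul_left p (hcard ▸ h)

theorem isPreprimitive_of_index_dvd_numDerangements {α : Type*} [Finite α] {G : Subgroup (Perm α)}
    (h5 : 5 ≤ Nat.card α) (hG : G.index ∣ numDerangements (Nat.card α)) : IsPreprimitive G α := by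
  have htrans : IsPretransitive G α :=
    isPretransitive_of_coprime_card_index ((coprime_numDerangements _).coprime_dvd_right hG)
  refine IsPreprimitive.mk fun {B} hB ↦ ?_
  rcases B.eq_empty_or_nonempty with rfl | hne
  · exact .inl Set.subsingleton_empty
  have hmul : B.ncard * (orbit G B).ncard = Nat.card α := hB.ncard_block_mul_ncard_orbit_eq hne
  rw [IsTrivialBlock, ← Set.ncard_le_one_iff_subsingleton, Set.eq_univ_iff_ncard]
  by_contra! hnontriv
  have hm : 2 ≤ (orbit G B).ncard := by
    have h1 : (orbit G B).ncard ≠ 1 := fun h ↦ hnontriv.2 (by rw [← hmul, h, mul_one])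
    have h0 : (orbit G B).ncard ≠ 0 := fun h ↦ by simp [h] at hmul; lia
    lia
  obtain ⟨p, hprime, hle, hndvd, hor⟩ := exists_isBlockObstruction hnontriv.1 hm (hmul ▸ h5)
  rw [hmul] at hle hndvd hor
  have hpG : ¬ p ∣ G.index := fun h ↦ hndvd (h.trans hG)
  rcases hor with hchoose | ⟨hpm, hpow⟩
  · exact hpG (hchoose.trans (choose_pred_dvd_index_of_isBlock hB hne))
  · rcases exists_ncard_dvd_prime_pow_or_card_lt hB hne hprime hle hpG with ⟨e, he⟩ | hlt
    · exact hpow e he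
    · rw [← hmul, mul_comm] at hlt
      exact hlt.not_ge (Nat.mul_le_mul_right _ hpm)

theorem index_dvd_factorial_of_isMultiplyPretransitive {α : Type*} [Finite α]
    {G : Subgroup (Perm α)} {k : ℕ} (hG : IsMultiplyPretransitive G α k) (hk : k ≤ Nat.card α) :
    G.index ∣ (Nat.card α - k).factorial := by
  obtain ⟨s, -, hs⟩ := Set.exists_subset_card_eq (s := (Set.univ : Set α)) (n := k)
    (by rwa [Set.ncard_univ])
  have hmul := hG.index_of_fixingSubgroup_mul hs
  refine Nat.dvd_of_mul_dvd_mul_left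
    (fixingSubgroup G s).index_ne_zero_of_finite.bot_lt ?_
  rw [hmul, ← Nat.card_perm, ← Subgroup.card_mul_index G]
  exact mul_dvd_mul_right (Subgroup.index_dvd_card _) _

theorem index_le_two_of_card_le_three {α : Type*} [Finite α] {G : Subgroup (Perm α)}
    (h3 : Nat.card α ≤ 3) (hG : G.index ∣ numDerangements (Nat.card α)) : G.index ≤ 2 := by
  have hfact : G.index ∣ (Nat.card α).factorial := Nat.card_perm (α := α) ▸ G.index_dvd_card
  generalize Nat.card α = n at *
  interval_cases n
  · exact (Nat.le_of_dvd one_pos hG).trans one_le_two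
  · exact (Nat.le_of_dvd one_pos hfact).trans one_le_two
  · exact Nat.le_of_dvd two_pos hfact
  · exact Nat.le_of_dvd two_pos hG

/-! ### Containing the alternating group -/

theorem exists_inter_smul_eq_singleton {M α : Type*} [Group M] [MulAction M α] [Finite α]
    [DecidableEq α] {s : Finset α} {x : α} (hM : IsMultiplyPretransitive M α s.card)
    (hs : 2 * s.card ≤ Nat.card α + 1) (hx : x ∈ s) :
    ∃ g : M, s ∩ g • s = {x} := by
  have := Fintype.ofFinite α
  have hpos : 0 < s.card := Finset.card_pos.mpr ⟨x, hx⟩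
  rw [Nat.card_eq_fintype_card] at hs
  obtain ⟨t, hts, htcard⟩ := Finset.exists_subset_card_eq (s := sᶜ) (n := s.card - 1)
    (by rw [Finset.card_compl]; lia)
  have hdisj : Disjoint s t := Finset.subset_compl_iff_disjoint_left.mp hts
  have hcard : (insert x t).card = s.card := by
    rw [Finset.card_insert_of_notMem (Finset.disjoint_left.mp hdisj hx)]
    lia
  have htrans : IsPretransitive M (Set.powersetCard α s.card) :=
    Set.powersetCard.isPretransitive_of_isMultiplyPretransitive _ hM
  obtain ⟨g, hg⟩ := exists_smul_eq M (Set.powersetCard.ofCard (rfl : s.card = s.card))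
    (Set.powersetCard.ofCard hcard)
  have hgs : g • s = insert x t := congrArg Subtype.val hg
  exact ⟨g, by rw [hgs, Finset.inter_insert_of_mem hx, Finset.disjoint_iff_inter_eq_empty.mp hdisj,
    insert_empty_eq]⟩

section Jordan

variable {α : Type*} [Fintype α] [DecidableEq α] {G : Subgroup (Perm α)}

theorem isMultiplyPretransitive_of_isCycle_mem (hG : IsPreprimitive G α) {c : Perm α} (hc : c ∈ G)
    (hcyc : c.IsCycle) (hprime : c.support.card.Prime) (hlt : c.support.card < Nat.card α) :
    IsMultiplyPretransitive G α (Nat.card α - c.support.card + 1) := by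
  have htrans := Perm.isPretransitive_of_isCycle_mem hcyc hc
  have hcard : Nat.card (SubMulAction.ofFixingSubgroup G (c.support : Set α)ᶜ) =
      c.support.card := by
    change Nat.card ((c.support : Set α)ᶜᶜ : Set α) = _
    rw [compl_compl, Nat.card_coe_set_eq, Set.ncard_coe_finset]
  have hprim : IsPreprimitive (fixingSubgroup G (c.support : Set α)ᶜ)
      (SubMulAction.ofFixingSubgroup G (c.support : Set α)ᶜ) :=
    IsPreprimitive.of_prime_card (hcard ▸ hprime)
  have hcompl : ((c.support : Set α)ᶜ).ncard = Nat.card α - c.support.card - 1 + 1 := by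
    rw [Set.ncard_compl, Set.ncard_coe_finset]
    lia
  have hmulti := hG.isMultiplyPreprimitive hcompl (by have := hprime.two_le; lia) hprim
  rw [show Nat.card α - c.support.card - 1 + 2 = Nat.card α - c.support.card + 1 by lia] at hmulti
  exact hmulti.isMultiplyPretransitive

theorem disjoint_swap_mul_of_support_inter_eq_singleton {σ τ : Perm α} {x : α}
    (h : σ.support ∩ τ.support = {x}) : (swap x (σ x) * σ).Disjoint τ := by
  have hmem (y : α) (hσy : σ y ≠ y) (hτy : τ y ≠ y) : y = x := by
    rw [← Finset.mem_singleton, ← h, Finset.mem_inter, Perm.mem_support, Perm.mem_support]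
    exact ⟨hσy, hτy⟩
  intro y
  by_cases hy : y = x
  · exact .inl (by simp [hy])
  refine or_iff_not_imp_right.mpr fun hτy ↦ ?_
  have hσy : σ y = y := by
    by_contra hσy
    exact hy (hmem y hσy hτy)
  have hyσ : y ≠ σ x := fun hyσ ↦ hy (σ.injective (hσy.trans hyσ))
  rw [Perm.mul_apply, hσy, swap_apply_of_ne_of_ne hy hyσ]

-- Writing `σ = swap x (σ x) * ρ` with `ρ` commuting with `τ`, the commutator is that of
-- `swap x (σ x)` and `τ`, hence the product of the swap with its conjugate by `τ`.
theorem isThreeCycle_commutatorElement {σ τ : Perm α} {x : α}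
    (h : σ.support ∩ τ.support = {x}) : ⁅σ, τ⁆.IsThreeCycle := by
  obtain ⟨hσ, hτ⟩ : σ x ≠ x ∧ τ x ≠ x := by
    rw [← Perm.mem_support, ← Perm.mem_support, ← Finset.mem_inter, h, Finset.mem_singleton]
  have hdisj := disjoint_swap_mul_of_support_inter_eq_singleton h
  set ρ := swap x (σ x) * σ
  have hσρ : σ = swap x (σ x) * ρ := (swap_mul_self_mul _ _ _).symm
  have hτσ : τ (σ x) = σ x := by
    by_contra hτσ
    have hmem : σ x ∈ σ.support ∩ τ.support := by simp [hσ, hτσ]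
    exact hσ (Finset.mem_singleton.mp (h ▸ hmem))
  have hne : τ x ≠ σ x := fun h' ↦ hσ (τ.injective (hτσ.trans h'.symm))
  have hcomm : ⁅σ, τ⁆ = swap (σ x) x * swap (σ x) (τ x) := by
    calc ⁅σ, τ⁆ = swap x (σ x) * (ρ * τ * ρ⁻¹) * swap x (σ x) * τ⁻¹ := by
          nth_rw 1 [hσρ]
          rw [commutatorElement_def, mul_inv_rev, swap_inv]
          group
      _ = swap x (σ x) * (τ * swap x (σ x) * τ⁻¹) := by
          rw [hdisj.commute.eq, mul_inv_cancel_right]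
          group
      _ = swap (σ x) x * swap (σ x) (τ x) := by
          rw [← swap_apply_apply, hτσ, swap_comm, swap_comm (τ x)]
  rw [hcomm]
  exact Perm.isThreeCycle_swap_mul_swap_same hσ hne.symm hτ.symm

theorem alternatingGroup_le_of_prime_not_dvd_index (hG : IsPreprimitive G α) {r : ℕ}
    (hr : r.Prime) (hrα : 2 * r ≤ Nat.card α + 1) (hrG : ¬ r ∣ G.index) :
    alternatingGroup α ≤ G := by
  have hr2 := hr.two_le
  obtain ⟨c, hc, hcyc, hcard⟩ := exists_isCycle_mem_card_support_eq_prime_pow hr hrG one_ne_zero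
    (by rw [pow_one, ← Nat.card_eq_fintype_card]; lia)
  rw [pow_one] at hcard
  subst hcard
  have hmulti := isMultiplyPretransitive_of_isCycle_mem hG hc hcyc hr (by lia)
  have htrans : IsMultiplyPretransitive G α c.support.card :=
    isMultiplyPretransitive_of_le (n := Nat.card α - c.support.card + 1) (by lia) (by lia)
  obtain ⟨x, hx⟩ := hcyc.nonempty_support
  obtain ⟨⟨g, hg⟩, hinter⟩ := exists_inter_smul_eq_singleton htrans hrα hx
  have hconj : g * c * g⁻¹ ∈ G := mul_mem (mul_mem hg hc) (inv_mem hg)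
  have hsupp : (g * c * g⁻¹).support = g • c.support :=
    Perm.support_toConjAct_eq_smul_support g c
  refine Perm.alternatingGroup_le_of_isPreprimitive_of_isThreeCycle_mem hG
    (isThreeCycle_commutatorElement (hsupp ▸ hinter)) ?_
  exact mul_mem (mul_mem (mul_mem hc hconj) (inv_mem hc)) (inv_mem hconj)

theorem alternatingGroup_le_of_index_lt_card (h5 : 5 ≤ Nat.card α) (hG : G.index < Nat.card α) :
    alternatingGroup α ≤ G := by
  have hcore : Nontrivial G.normalCore := by
    rw [Subgroup.nontrivial_iff_ne_bot, Subgroup.normalCore_eq_ker, Ne, MonoidHom.ker_eq_bot_iff]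
    intro hinj
    have hle := Nat.card_le_card_of_injective _ hinj
    rw [Nat.card_perm, Nat.card_perm] at hle
    exact hle.not_gt ((Nat.factorial_lt G.index_ne_zero_of_finite.bot_lt).mpr hG)
  exact (Perm.alternatingGroup_le_of_normal h5 hcore).trans G.normalCore_le

theorem alternatingGroup_le_of_card_eq_seven (h7 : Nat.card α = 7)
    (hG : G.index ∣ numDerangements 7) : alternatingGroup α ≤ G := by
  have hD7 : numDerangements 7 = 1854 := by decide
  have h5G : ¬ 5 ∣ G.index := fun h ↦ absurd (h.trans hG) (by rw [hD7]; decide)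
  have hprim : IsPreprimitive G α :=
    isPreprimitive_of_index_dvd_numDerangements (by lia) (by rwa [h7])
  obtain ⟨c, hc, hcyc, hcard⟩ := exists_isCycle_mem_card_support_eq_prime_pow Nat.prime_five h5G
    one_ne_zero (by rw [← Nat.card_eq_fintype_card]; lia)
  have htrans := isMultiplyPretransitive_of_isCycle_mem hprim hc hcyc
    (hcard ▸ Nat.prime_five) (by lia)
  have h24 : G.index ∣ Nat.factorial 4 := by
    have := index_dvd_factorial_of_isMultiplyPretransitive htrans (by lia)
    rwa [h7, hcard] at this
  have h6 : G.index ∣ 6 := by simpa [hD7, Nat.factorial] using Nat.dvd_gcd hG h24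
  exact alternatingGroup_le_of_index_lt_card (by lia) (by have := Nat.le_of_dvd (by lia) h6; lia)

theorem alternatingGroup_le_of_index_dvd_numDerangements (h4 : Nat.card α ≠ 4)
    (hG : G.index ∣ numDerangements (Nat.card α)) : alternatingGroup α ≤ G := by
  by_cases h3 : Nat.card α ≤ 3
  · exact Perm.alternatingGroup_le_of_index_le_two (index_le_two_of_card_le_three h3 hG)
  by_cases h7 : Nat.card α = 7
  · exact alternatingGroup_le_of_card_eq_seven h7 (h7 ▸ hG)
  obtain ⟨r, hr, hrα, hrD⟩ :=
    exists_prime_two_mul_le_not_dvd_numDerangements (n := Nat.card α) (by lia) h7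
  exact alternatingGroup_le_of_prime_not_dvd_index
    (isPreprimitive_of_index_dvd_numDerangements (by lia) hG) hr hrα (fun h ↦ hrD (h.trans hG))

end Jordan

/-! ### Even and odd derangements -/

section Sign

variable {α : Type*} [Fintype α] [DecidableEq α]

theorem sum_sign_derangements :
    ∑ τ ∈ (derangements α).toFinset, (Perm.sign τ : ℤ) =
      (-1) ^ Fintype.card α * (1 - Fintype.card α) := by
  let A : Matrix α α ℤ := Matrix.of fun i j ↦ if i ≠ j then 1 else 0
  have hprod (τ : Perm α) : ∏ i, A (τ i) i = if τ ∈ derangements α then 1 else 0 := by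
    simp only [A, Matrix.of_apply, Finset.prod_boole, Finset.mem_univ, forall_const]
    rfl
  have hdet : A.det = ∑ τ ∈ (derangements α).toFinset, (Perm.sign τ : ℤ) := by
    simp only [Matrix.det_apply', hprod, mul_ite, mul_one, mul_zero, ← Finset.sum_filter]
    congr 1
    ext τ
    simp
  have hA : A = -(1 - Matrix.replicateCol Unit (1 : α → ℤ) *
      Matrix.replicateRow Unit (1 : α → ℤ)) := by
    ext i j
    by_cases h : i = j <;> simp [A, h, Matrix.mul_apply]
  rw [← hdet, hA, Matrix.det_neg, Matrix.det_one_sub_mul_comm]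
  simp [Matrix.mul_apply]

theorem sum_sign_eq_mul_card_filter (F : Finset (Perm α)) (u : ℤˣ) :
    ∑ τ ∈ F, (Perm.sign τ : ℤ) = u * (2 * (F.filter (Perm.sign · = u)).card - F.card) := by
  have hsign (τ : Perm α) :
      (Perm.sign τ : ℤ) = u * (2 * (if Perm.sign τ = u then 1 else 0) - 1) := by
    rcases Int.units_eq_one_or (Perm.sign τ) with h | h <;>
      rcases Int.units_eq_one_or u with rfl | rfl <;> simp [h]
  simp_rw [hsign, ← Finset.mul_sum, Finset.sum_sub_distrib, ← Finset.mul_sum, Finset.sum_boole]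
  simp

theorem mem_smul_alternatingGroup_iff {σ τ : Perm α} :
    τ ∈ σ • (alternatingGroup α : Set (Perm α)) ↔ Perm.sign τ = Perm.sign σ := by
  rw [Set.mem_smul_set_iff_inv_smul_mem, SetLike.mem_coe, Perm.mem_alternatingGroup, smul_eq_mul,
    map_mul, map_inv, inv_mul_eq_one, eq_comm]

theorem ncard_coset_alternatingGroup_inter_derangements_mul_two_ne [Nontrivial α] (σ : Perm α) :
    (σ • (alternatingGroup α : Set (Perm α)) ∩ derangements α).ncard * 2 ≠
      numDerangements (Nat.card α) := by
  intro h
  have hcoset : σ • (alternatingGroup α : Set (Perm α)) ∩ derangements α =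
      (derangements α).toFinset.filter (Perm.sign · = Perm.sign σ) := by
    ext τ
    simp [mem_smul_alternatingGroup_iff, and_comm]
  rw [hcoset, Set.ncard_coe_finset, Nat.card_eq_fintype_card,
    ← card_derangements_eq_numDerangements, ← Set.toFinset_card] at h
  have hsum := sum_sign_eq_mul_card_filter (derangements α).toFinset (Perm.sign σ)
  rw [← h, sum_sign_derangements, Nat.cast_mul, mul_comm (2 : ℤ), Nat.cast_two, sub_self,
    mul_zero] at hsum
  have hcard : (1 - Fintype.card α : ℤ) = 0 := by simpa using hsum
  have := Fintype.one_lt_card (α := α)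
  lia

theorem eq_top_of_alternatingGroup_le {G : Subgroup (Perm α)} {σ : Perm α}
    (hA : alternatingGroup α ≤ G)
    (h : (σ • (G : Set (Perm α)) ∩ derangements α).ncard * G.index =
      numDerangements (Nat.card α)) : G = ⊤ := by
  rcases subsingleton_or_nontrivial α with _ | _
  · exact Subsingleton.elim _ _
  have hdvd : G.index ∣ 2 := alternatingGroup.index_eq_two (α := α) ▸ Subgroup.index_dvd_of_le hA
  rcases (Nat.dvd_prime Nat.prime_two).mp hdvd with hone | htwo
  · exact Subgroup.index_eq_one.mp hone
  · obtain rfl := Perm.eq_alternatingGroup_of_index_eq_two htwo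
    exact absurd (htwo ▸ h) (ncard_coset_alternatingGroup_inter_derangements_mul_two_ne σ)

end Sign

/-! ### Degree four -/

theorem card_centralizer_perm_fin_four_le {z : Perm (Fin 4)} (hz : z ≠ 1) :
    Nat.card (Subgroup.centralizer {z}) ≤ 8 := by
  have hcount : ∀ z : Perm (Fin 4), z ≠ 1 →
      (Finset.univ.filter fun r : Perm (Fin 4) ↦ r * z = z * r).card ≤ 8 := by decide +kernel
  refine le_of_eq_of_le ?_ (hcount z hz)
  simp only [Nat.card_eq_fintype_card, Fintype.card_subtype, Subgroup.mem_centralizer_singleton_iff]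

theorem ncard_coset_centralizer_inter_derangements_ne_three {z : Perm (Fin 4)}
    (hz : Nat.card (Subgroup.centralizer {z}) = 8) (σ : Perm (Fin 4)) :
    (σ • (Subgroup.centralizer {z} : Set (Perm (Fin 4))) ∩ derangements (Fin 4)).ncard ≠ 3 := by
  have hcount : ∀ z σ : Perm (Fin 4),
      (Finset.univ.filter fun r : Perm (Fin 4) ↦ r * z = z * r).card = 8 →
      (Finset.univ.filter fun r : Perm (Fin 4) ↦
        σ⁻¹ * r * z = z * (σ⁻¹ * r) ∧ r ∈ derangements (Fin 4)).card ≠ 3 := by decide +kernel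
  have h8 : (Finset.univ.filter fun r : Perm (Fin 4) ↦ r * z = z * r).card = 8 := by
    simpa only [Nat.card_eq_fintype_card, Fintype.card_subtype,
      Subgroup.mem_centralizer_singleton_iff] using hz
  convert! hcount z σ h8
  rw [← Set.ncard_coe_finset]
  congr 1
  ext r
  simp [Set.mem_smul_set_iff_inv_smul_mem, Subgroup.mem_centralizer_singleton_iff]

theorem exists_eq_centralizer_of_card_eq_eight {G : Subgroup (Perm (Fin 4))}
    (hG : Nat.card G = 8) : ∃ z, G = Subgroup.centralizer {z} := by
  have : Nontrivial G := Finite.one_lt_card_iff_nontrivial.mp (by lia)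
  have hpgroup : IsPGroup 2 G := IsPGroup.of_card (n := 3) hG
  have := hpgroup.center_nontrivial
  obtain ⟨⟨z, hzG⟩, hz⟩ := exists_ne (1 : Subgroup.center G)
  have hle : G ≤ Subgroup.centralizer {(z : Perm (Fin 4))} := fun g hg ↦
    Subgroup.mem_centralizer_singleton_iff.mpr
      (congrArg Subtype.val (Subgroup.mem_center_iff.mp hzG ⟨g, hg⟩))
  have hz1 : (z : Perm (Fin 4)) ≠ 1 := fun h ↦ hz (Subtype.ext (Subtype.ext h))
  exact ⟨z, Subgroup.eq_of_le_of_card_ge hle ((card_centralizer_perm_fin_four_le hz1).trans hG.ge)⟩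

theorem eq_top_of_ncard_coset_inter_derangements_fin_four {G : Subgroup (Perm (Fin 4))}
    {σ : Perm (Fin 4)} (h : (σ • (G : Set (Perm (Fin 4))) ∩ derangements (Fin 4)).ncard * G.index =
      numDerangements 4) : G = ⊤ := by
  have hD4 : numDerangements 4 = 9 := by decide
  have hcard : Nat.card G * G.index = 24 := by
    rw [G.card_mul_index, Nat.card_perm, Nat.card_fin]; rfl
  have hdvd : G.index ∣ 3 := by
    simpa using Nat.dvd_gcd (Dvd.intro_left _ (h.trans hD4)) (Dvd.intro_left _ hcard)
  rcases (Nat.dvd_prime Nat.prime_three).mp hdvd with hone | hthree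
  · exact Subgroup.index_eq_one.mp hone
  rw [hthree] at h hcard
  obtain ⟨z, rfl⟩ := exists_eq_centralizer_of_card_eq_eight (by lia : Nat.card G = 8)
  exact absurd (show _ = 3 by lia)
    (ncard_coset_centralizer_inter_derangements_ne_three (z := z) (by lia) σ)

theorem mul_index_eq_of_div_card_eq_div_card {Γ : Type*} [Group Γ] [Finite Γ] {G : Subgroup Γ}
    {a b : ℕ} (h : (a : ℚ) / Nat.card G = b / Nat.card Γ) : a * G.index = b := by
  have hcard : (Nat.card G : ℚ) ≠ 0 := Nat.cast_ne_zero.mpr Nat.card_pos.ne'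
  have hindex : (G.index : ℚ) ≠ 0 := Nat.cast_ne_zero.mpr G.index_ne_zero_of_finite
  rw [← G.card_mul_index, Nat.cast_mul] at h
  field_simp at h
  exact_mod_cast h

theorem derangement_proportion_characterizes_symmetric
    (n : ℕ) (hn : 1 ≤ n) (G : Subgroup (Equiv.Perm (Fin n)))
    (C : Set (Equiv.Perm (Fin n)))
    (hC : ∃ σ : Equiv.Perm (Fin n), C = {τ : Equiv.Perm (Fin n) | ∃ g ∈ G, τ = σ * g})
    (h : ({σ ∈ C | ∀ x, σ x ≠ x}.ncard : ℚ) / (C.ncard : ℚ)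
        = (numDerangements n : ℚ) / (Nat.factorial n : ℚ)) :
    G = ⊤ ∧ C = Set.univ := by
  obtain ⟨σ, hσ⟩ := hC
  obtain rfl : C = σ • (G : Set (Perm (Fin n))) := by
    ext τ
    simp [hσ, Set.mem_smul_set, eq_comm]
  have hcard : (σ • (G : Set (Perm (Fin n)))).ncard = Nat.card G := Set.ncard_smul_set σ _
  have hfact : n.factorial = Nat.card (Perm (Fin n)) := by rw [Nat.card_perm, Nat.card_fin]
  have hcount : (σ • (G : Set (Perm (Fin n))) ∩ derangements (Fin n)).ncard * G.index =
      numDerangements (Nat.card (Fin n)) :=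
    mul_index_eq_of_div_card_eq_div_card (by rwa [Nat.card_fin, ← hfact, ← hcard])
  have htop : G = ⊤ := by
    by_cases h4 : n = 4
    · subst h4
      exact eq_top_of_ncard_coset_inter_derangements_fin_four (by rwa [Nat.card_fin] at hcount)
    · have hA : alternatingGroup (Fin n) ≤ G :=
        alternatingGroup_le_of_index_dvd_numDerangements (by rwa [Nat.card_fin])
          (Dvd.intro_left _ hcount)
      exact eq_top_of_alternatingGroup_le hA hcount
  exact ⟨htop, by rw [htop, Subgroup.coe_top, Set.smul_set_univ]⟩
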